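/- arXiv:0811.3832 — 6 statements merged into one kernel-verified Lean document; each statement's English description precedes it below -/
import Mathlib

section
/- Let ρ ≥ 1 be an integer. A set A ⊆ ℤ² is a maximal anticode of Manhattan diameter 2ρ if and only if A is a translate of the Lee sphere of radius ρ (i.e., A = {(x,y) ∈ ℤ² : |x−a|+|y−b| ≤ ρ} for some (a,b) ∈ ℤ²) or a translate of the quadricentred Lee sphere of radius ρ (i.e., A = {(x,y) ∈ ℤ² : min(|x−a|+|y−b|, |x−a−1|+|y−b|, |x−a|+|y−b−1|, |x−a−1|+|y−b−1|) ≤ ρ−1} for some (a,b) ∈ ℤ²). -/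
/-- Manhattan distance on ℤ². -/
def mdist (p q : ℤ × ℤ) : ℤ := |q.1 - p.1| + |q.2 - p.2|

/-- `A` is a maximal anticode of Manhattan diameter `r`: every pair of points of `A` is at
Manhattan distance at most `r`, and adding any point outside `A` creates a pair at distance
greater than `r`. -/
def IsMaxAnticode (A : Set (ℤ × ℤ)) (r : ℤ) : Prop :=
  (∀ p ∈ A, ∀ q ∈ A, mdist p q ≤ r) ∧
  ∀ p : ℤ × ℤ, p ∉ A → ∃ q ∈ A, r < mdist p q

/-!
In the rotated coordinates `x + y` and `x - y` the Manhattan distance becomes the Chebyshev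
distance, so a set of diameter at most `r` fits into a square of side `r` in these coordinates,
and such a square has diameter at most `r` itself. For `r ≥ 1` the maximal anticodes are therefore
exactly these squares. The two rotated coordinates of a lattice point have the same parity, so for
`r = 2ρ` there are two kinds of squares: if the coordinates of the lower corner have the same
parity, then the centre is a lattice point and the square is a Lee sphere; otherwise the centre is
the centre of a unit cell and the square is a quadricentred Lee sphere.
-/

section DiagonalBox

open Set

lemma abs_add_abs_le_iff_abs_add_le_and_abs_sub_le {α : Type*} [AddCommGroup α] [LinearOrder α]
    [IsOrderedAddMonoid α] {s t r : α} : |s| + |t| ≤ r ↔ |s + t| ≤ r ∧ |s - t| ≤ r := by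
  constructor
  · exact fun h ↦ ⟨(abs_add_le s t).trans h, (abs_sub s t).trans h⟩
  · rintro ⟨hadd, hsub⟩
    rw [abs_le'] at hadd hsub
    rcases abs_choice s with hs | hs <;> rcases abs_choice t with ht | ht <;> rw [hs, ht] <;> grind

lemma exists_subset_Icc_add_of_forall_sub_le {α : Type*} [ConditionallyCompleteLattice α]
    [AddCommGroup α] [IsOrderedAddMonoid α] {s : Set α} {r : α}
    (h : ∀ x ∈ s, ∀ y ∈ s, x - y ≤ r) : ∃ u, s ⊆ Icc u (u + r) := by
  refine ⟨sInf s, fun x hx ↦ ⟨csInf_le ⟨x - r, ?_⟩ hx, ?_⟩⟩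
  · exact fun y hy ↦ sub_le_comm.mp (h x hx y hy)
  · exact sub_le_iff_le_add.mp (le_csInf ⟨x, hx⟩ fun y hy ↦ sub_le_comm.mp (h x hx y hy))

/-- Anticodes of Manhattan diameter at most `r`, without the maximality of `IsMaxAnticode`. -/
def IsAnticode (A : Set (ℤ × ℤ)) (r : ℤ) : Prop :=
  ∀ p ∈ A, ∀ q ∈ A, mdist p q ≤ r

/-- The square of side `r` with lower corner `(u, v)` in the rotated coordinates `x + y`, `x - y`.
No lattice point has rotated coordinates `(u, v)` when `u + v` is odd. -/
def diagonalBox (r u v : ℤ) : Set (ℤ × ℤ) :=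
  {p | p.1 + p.2 ∈ Icc u (u + r) ∧ p.1 - p.2 ∈ Icc v (v + r)}

/-- The Lee sphere of radius `ρ` centred at `(a, b)`. -/
def leeSphere (ρ a b : ℤ) : Set (ℤ × ℤ) :=
  {p | |p.1 - a| + |p.2 - b| ≤ ρ}

/-- The quadricentred Lee sphere of radius `ρ`: the union of the Lee spheres of radius `ρ - 1`
centred at the corners of the unit cell with lower left corner `(a, b)`. -/
def quadricentredLeeSphere (ρ a b : ℤ) : Set (ℤ × ℤ) :=
  {p | min (min (|p.1 - a| + |p.2 - b|) (|p.1 - a - 1| + |p.2 - b|))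
    (min (|p.1 - a| + |p.2 - b - 1|) (|p.1 - a - 1| + |p.2 - b - 1|)) ≤ ρ - 1}

variable {A B : Set (ℤ × ℤ)} {p q : ℤ × ℤ} {r u v ρ a b s : ℤ}

lemma mdist_le_iff : mdist p q ≤ r ↔
    |(q.1 + q.2) - (p.1 + p.2)| ≤ r ∧ |(q.1 - q.2) - (p.1 - p.2)| ≤ r := by
  rw [mdist, abs_add_abs_le_iff_abs_add_le_and_abs_sub_le, add_sub_add_comm, sub_sub_sub_comm]

lemma IsMaxAnticode.isAnticode (hA : IsMaxAnticode A r) : IsAnticode A r := hA.1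

lemma IsMaxAnticode.eq_of_subset (hA : IsMaxAnticode A r) (hB : IsAnticode B r) (hAB : A ⊆ B) :
    A = B := by
  refine hAB.antisymm fun p hpB ↦ ?_
  by_contra hpA
  obtain ⟨q, hqA, hlt⟩ := hA.2 p hpA
  exact hlt.not_ge (hB p hpB q (hAB hqA))

lemma IsAnticode.exists_subset_diagonalBox (hA : IsAnticode A r) :
    ∃ u v, A ⊆ diagonalBox r u v := by
  obtain ⟨u, hu⟩ : ∃ u, (fun p : ℤ × ℤ ↦ p.1 + p.2) '' A ⊆ Icc u (u + r) := by
    apply exists_subset_Icc_add_of_forall_sub_le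
    rintro _ ⟨p, hp, rfl⟩ _ ⟨q, hq, rfl⟩
    exact (abs_le.mp (mdist_le_iff.mp (hA q hq p hp)).1).2
  obtain ⟨v, hv⟩ : ∃ v, (fun p : ℤ × ℤ ↦ p.1 - p.2) '' A ⊆ Icc v (v + r) := by
    apply exists_subset_Icc_add_of_forall_sub_le
    rintro _ ⟨p, hp, rfl⟩ _ ⟨q, hq, rfl⟩
    exact (abs_le.mp (mdist_le_iff.mp (hA q hq p hp)).2).2
  exact ⟨u, v, fun p hp ↦ ⟨hu (mem_image_of_mem _ hp), hv (mem_image_of_mem _ hp)⟩⟩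

lemma isAnticode_diagonalBox : IsAnticode (diagonalBox r u v) r := by
  rintro p ⟨⟨_, _⟩, _, _⟩ q ⟨⟨_, _⟩, _, _⟩
  rw [mdist_le_iff, abs_le, abs_le]
  lia

-- Of the two values `v`, `v + 1` for `x - y`, one has the parity of `s`.
lemma exists_mem_diagonalBox_add_eq (hr : 1 ≤ r) (hs : s ∈ Icc u (u + r)) :
    ∃ q ∈ diagonalBox r u v, q.1 + q.2 = s := by
  refine ⟨((s + v + 1) / 2, s - (s + v + 1) / 2), ⟨?_, ?_⟩, by lia⟩ <;>
    simp only [mem_Icc] at hs ⊢ <;> lia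

lemma exists_mem_diagonalBox_sub_eq (hr : 1 ≤ r) (hs : s ∈ Icc v (v + r)) :
    ∃ q ∈ diagonalBox r u v, q.1 - q.2 = s := by
  refine ⟨((u + s + 1) / 2, (u + s + 1) / 2 - s), ⟨?_, ?_⟩, by lia⟩ <;>
    simp only [mem_Icc] at hs ⊢ <;> lia

lemma isMaxAnticode_diagonalBox (hr : 1 ≤ r) : IsMaxAnticode (diagonalBox r u v) r := by
  refine ⟨isAnticode_diagonalBox, fun p hp ↦ ?_⟩
  by_contra! hclose
  have hadd (s : ℤ) (hs : s ∈ Icc u (u + r)) : |s - (p.1 + p.2)| ≤ r := by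
    obtain ⟨q, hq, rfl⟩ := exists_mem_diagonalBox_add_eq (v := v) hr hs
    exact (mdist_le_iff.mp (hclose q hq)).1
  have hsub (s : ℤ) (hs : s ∈ Icc v (v + r)) : |s - (p.1 - p.2)| ≤ r := by
    obtain ⟨q, hq, rfl⟩ := exists_mem_diagonalBox_sub_eq (u := u) hr hs
    exact (mdist_le_iff.mp (hclose q hq)).2
  have hle (w : ℤ) : w ≤ w + r := by lia
  have hadd_left := abs_le.mp (hadd u (left_mem_Icc.mpr (hle u)))
  have hadd_right := abs_le.mp (hadd (u + r) (right_mem_Icc.mpr (hle u)))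
  have hsub_left := abs_le.mp (hsub v (left_mem_Icc.mpr (hle v)))
  have hsub_right := abs_le.mp (hsub (v + r) (right_mem_Icc.mpr (hle v)))
  exact hp ⟨⟨by lia, by lia⟩, by lia, by lia⟩

theorem isMaxAnticode_iff_exists_eq_diagonalBox (hr : 1 ≤ r) :
    IsMaxAnticode A r ↔ ∃ u v, A = diagonalBox r u v := by
  constructor
  · intro hA
    obtain ⟨u, v, hsubset⟩ := hA.isAnticode.exists_subset_diagonalBox
    exact ⟨u, v, hA.eq_of_subset isAnticode_diagonalBox hsubset⟩
  · rintro ⟨u, v, rfl⟩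
    exact isMaxAnticode_diagonalBox hr

lemma leeSphere_eq_diagonalBox :
    leeSphere ρ a b = diagonalBox (2 * ρ) (a + b - ρ) (a - b - ρ) := by
  ext p
  simp only [leeSphere, diagonalBox, mem_ofPred_eq, mem_Icc,
    abs_add_abs_le_iff_abs_add_le_and_abs_sub_le, abs_le]
  lia

lemma quadricentredLeeSphere_eq_diagonalBox :
    quadricentredLeeSphere ρ a b = diagonalBox (2 * ρ) (a + b + 1 - ρ) (a - b - ρ) := by
  ext p
  simp only [quadricentredLeeSphere, diagonalBox, mem_ofPred_eq, mem_Icc, min_le_iff,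
    abs_add_abs_le_iff_abs_add_le_and_abs_sub_le, abs_le]
  omega

lemma exists_diagonalBox_eq_leeSphere_of_even (huv : Even (u + v)) :
    ∃ a b, diagonalBox (2 * ρ) u v = leeSphere ρ a b := by
  obtain ⟨k, hk⟩ := huv
  refine ⟨k + ρ, u - k, ?_⟩
  rw [leeSphere_eq_diagonalBox]
  congr 1 <;> lia

lemma exists_diagonalBox_eq_quadricentredLeeSphere_of_odd (huv : Odd (u + v)) :
    ∃ a b, diagonalBox (2 * ρ) u v = quadricentredLeeSphere ρ a b := by
  obtain ⟨k, hk⟩ := huv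
  refine ⟨k + ρ, u - k - 1, ?_⟩
  rw [quadricentredLeeSphere_eq_diagonalBox]
  congr 1 <;> lia

end DiagonalBox

/-- For `ρ ≥ 1`, the maximal anticodes of Manhattan diameter `2ρ` in ℤ² are exactly the
translates of the Lee sphere of radius `ρ` and the translates of the quadricentred Lee
sphere of radius `ρ`. -/
theorem stmt_0 (ρ : ℤ) (hρ : 1 ≤ ρ) (A : Set (ℤ × ℤ)) :
    IsMaxAnticode A (2 * ρ) ↔
      ((∃ a b : ℤ, A = {p : ℤ × ℤ | |p.1 - a| + |p.2 - b| ≤ ρ}) ∨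
       (∃ a b : ℤ, A = {p : ℤ × ℤ |
          min (min (|p.1 - a| + |p.2 - b|) (|p.1 - a - 1| + |p.2 - b|))
              (min (|p.1 - a| + |p.2 - b - 1|) (|p.1 - a - 1| + |p.2 - b - 1|)) ≤ ρ - 1})) := by
  change _ ↔ (∃ a b, A = leeSphere ρ a b) ∨ ∃ a b, A = quadricentredLeeSphere ρ a b
  rw [isMaxAnticode_iff_exists_eq_diagonalBox (by lia)]
  constructor
  · rintro ⟨u, v, rfl⟩
    exact (Int.even_or_odd (u + v)).imp exists_diagonalBox_eq_leeSphere_of_even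
      exists_diagonalBox_eq_quadricentredLeeSphere_of_odd
  · rintro (⟨a, b, rfl⟩ | ⟨a, b, rfl⟩)
    · exact ⟨_, _, leeSphere_eq_diagonalBox⟩
    · exact ⟨_, _, quadricentredLeeSphere_eq_diagonalBox⟩
end

section
/- There is a constant C > 0 such that for every positive integer r, every distinct difference configuration D ⊆ ℤ² whose points have pairwise Manhattan distance at most r satisfies |D| ≤ r/√2 + C·r^(2/3). -/
/-- A set of points is a distinct difference configuration if all differences between
distinct pairs of its points are distinct. -/
def IsDDC {G : Type*} [Sub G] (D : Set G) : Prop :=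
  ∀ p₁ ∈ D, ∀ p₂ ∈ D, ∀ q₁ ∈ D, ∀ q₂ ∈ D,
    p₂ - p₁ = q₂ - q₁ → p₂ ≠ p₁ → p₁ = q₁ ∧ p₂ = q₂

/-!
Work with the diamonds of points whose two diagonal coordinates `x + y` and `x - y` lie in
half-open intervals of length `2k`; such a diamond has `2k²` points. A configuration `D` of
diameter `r` fits into a diamond with `k = ⌊r/2⌋ + 1`. Let `S` be a diamond with parameter `l`. In
an equation `p + s = q + t` with `p ≠ q` in `D` and `s, t ∈ S`, the pair `(s, t)` determines
`(p, q)`, so the additive energy of `D` and `S` is at most `|D||S| + |S|²`. Since `D + S` lies in a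
diamond with parameter `k + l`, Cauchy–Schwarz gives `|D|² ≤ ((k + l) / l)² |D| + 2 (k + l)²`,
hence `|D| ≤ ((k + l) / l)² + √2 (k + l)`. Choosing `l ≈ r^(2/3)` balances the error terms.
-/

open Finset
open scoped Pointwise Combinatorics.Additive

section Energy

variable {G : Type*} [AddCommGroup G] [DecidableEq G] {D : Finset G}

theorem IsDDC.addEnergy_le (hD : IsDDC (D : Set G)) (S : Finset G) :
    E[D, S] ≤ #D * #S + #S ^ 2 := by
  rw [addEnergy, ← card_filter_add_card_filter_not (fun x ↦ x.1.1 = x.1.2), sq, ← card_product,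
    ← card_product]
  refine add_le_add (card_le_card_of_injOn (fun x ↦ (x.1.1, x.2.1)) ?_ ?_)
    (card_le_card_of_injOn Prod.snd ?_ ?_)
  · simp +contextual [Set.MapsTo]
  · rintro ⟨⟨p, q⟩, s, t⟩ hx ⟨⟨p', q'⟩, s', t'⟩ hx' heq
    simp only [coe_filter, mem_filter, Set.mem_ofPred_eq, Prod.mk.injEq] at hx hx' heq
    obtain ⟨⟨-, hst⟩, rfl⟩ := hx
    obtain ⟨⟨-, hst'⟩, rfl⟩ := hx'
    obtain ⟨rfl, rfl⟩ := heq
    rw [← add_left_cancel hst, ← add_left_cancel hst']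
  · simp +contextual [Set.MapsTo]
  · rintro ⟨⟨p, q⟩, s, t⟩ hx ⟨⟨p', q'⟩, s', t'⟩ hx' heq
    simp only [coe_filter, mem_filter, mem_product, Set.mem_ofPred_eq, Prod.mk.injEq] at hx hx' heq
    obtain ⟨⟨⟨⟨hp, hq⟩, -⟩, hsum⟩, hpq⟩ := hx
    obtain ⟨⟨⟨⟨hp', hq'⟩, -⟩, hsum'⟩, -⟩ := hx'
    obtain ⟨rfl, rfl⟩ := heq
    have hdiff : p - q = p' - q' := by
      rw [sub_eq_sub_iff_add_eq_add.2 (hsum.trans (add_comm _ _)),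
        sub_eq_sub_iff_add_eq_add.2 (hsum'.trans (add_comm _ _))]
    obtain ⟨rfl, rfl⟩ := hD q hq p hp q' hq' p' hp' hdiff hpq
    rfl

theorem IsDDC.card_sq_mul_card_le (hD : IsDDC (D : Set G)) (S : Finset G) :
    #D ^ 2 * #S ≤ #(D + S) * (#D + #S) := by
  rcases S.eq_empty_or_nonempty with rfl | hS
  · simp
  · refine Nat.le_of_mul_le_mul_right ?_ hS.card_pos
    calc #D ^ 2 * #S * #S = #D ^ 2 * #S ^ 2 := by ring
      _ ≤ #(D + S) * E[D, S] := le_card_add_mul_addEnergy D S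
      _ ≤ #(D + S) * (#D * #S + #S ^ 2) := by gcongr; exact hD.addEnergy_le S
      _ = #(D + S) * (#D + #S) * #S := by ring

end Energy

section Diamond

theorem prodMk_add_sub_injective :
    Function.Injective fun p : ℤ × ℤ ↦ (p.1 + p.2, p.1 - p.2) := by
  rintro ⟨x, y⟩ ⟨x', y'⟩ h
  simp only [Prod.mk.injEq] at h ⊢
  omega

/-- The diamond, a square in the diagonal coordinates `(x + y, x - y)`, with corner `(a, b)` and
side `2 * k`, half-open. It serves both to enclose a configuration of bounded Manhattan diameter
and to test it by translates; the side is kept even so that the number of points does not depend on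
the corner. -/
noncomputable def diamond (a b : ℤ) (k : ℕ) : Finset (ℤ × ℤ) :=
  (Ico a (a + 2 * k) ×ˢ Ico b (b + 2 * k)).preimage (fun p ↦ (p.1 + p.2, p.1 - p.2))
    prodMk_add_sub_injective.injOn

theorem mem_diamond {a b : ℤ} {k : ℕ} {p : ℤ × ℤ} :
    p ∈ diamond a b k ↔
      p.1 + p.2 ∈ Set.Ico a (a + 2 * k) ∧ p.1 - p.2 ∈ Set.Ico b (b + 2 * k) := by
  simp [diamond]

-- As `x + y` and `x - y` have the same parity, `x - y` is recovered from `x + y` and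
-- `⌊(x - y - b) / 2⌋`.
theorem card_diamond (a b : ℤ) (k : ℕ) : #(diamond a b k) = 2 * k ^ 2 := by
  have hbox : #(Ico (0 : ℤ) (2 * k) ×ˢ Ico (0 : ℤ) k) = 2 * k ^ 2 := by
    rw [card_product, Int.card_Ico, Int.card_Ico, show (2 * k - 0 : ℤ).toNat = 2 * k by omega,
      show (k - 0 : ℤ).toNat = k by omega]
    ring
  rw [← hbox]
  refine card_nbij' (fun p ↦ (p.1 + p.2 - a, (p.1 - p.2 - b) / 2))
    (fun q ↦ ((a + q.1 + (b + 2 * q.2 + (a + q.1 - b) % 2)) / 2,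
      (a + q.1 - (b + 2 * q.2 + (a + q.1 - b) % 2)) / 2)) ?_ ?_ ?_ ?_
  all_goals
    rintro ⟨x, y⟩ h
    simp only [mem_coe, mem_diamond, mem_product, mem_Ico, Set.mem_Ico, Prod.mk.injEq] at h ⊢
    omega

theorem diamond_add_diamond_subset (a b c d : ℤ) (k l : ℕ) :
    diamond a b k + diamond c d l ⊆ diamond (a + c) (b + d) (k + l) := by
  intro _ h
  obtain ⟨p, hp, q, hq, rfl⟩ := mem_add.1 h
  simp only [mem_diamond, Set.mem_Ico, Prod.fst_add, Prod.snd_add, Nat.cast_add] at hp hq ⊢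
  omega

theorem exists_forall_mem_Ico_of_sub_lt {α M : Type*} [AddCommGroup M] [LinearOrder M]
    [IsOrderedAddMonoid M] {s : Finset α} {f : α → M} {r : M}
    (h : ∀ p ∈ s, ∀ q ∈ s, f q - f p < r) : ∃ a, ∀ p ∈ s, f p ∈ Set.Ico a (a + r) := by
  rcases s.eq_empty_or_nonempty with rfl | hs
  · exact ⟨0, by simp⟩
  · obtain ⟨p₀, hp₀, hmin⟩ := s.exists_min_image f hs
    exact ⟨f p₀, fun p hp ↦ ⟨hmin p hp, sub_lt_iff_lt_add'.1 (h p₀ hp₀ p hp)⟩⟩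

theorem add_sub_add_le_mdist (p q : ℤ × ℤ) : (q.1 + q.2) - (p.1 + p.2) ≤ mdist p q := by
  unfold mdist
  linarith [le_abs_self (q.1 - p.1), le_abs_self (q.2 - p.2)]

theorem sub_sub_sub_le_mdist (p q : ℤ × ℤ) : (q.1 - q.2) - (p.1 - p.2) ≤ mdist p q := by
  unfold mdist
  linarith [le_abs_self (q.1 - p.1), neg_le_abs (q.2 - p.2)]

theorem exists_subset_diamond_of_mdist_lt {D : Finset (ℤ × ℤ)} {k : ℕ}
    (h : ∀ p ∈ D, ∀ q ∈ D, mdist p q < 2 * k) : ∃ a b, D ⊆ diamond a b k := by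
  obtain ⟨a, ha⟩ := exists_forall_mem_Ico_of_sub_lt (s := D) (f := fun p ↦ p.1 + p.2)
    fun p hp q hq ↦ (add_sub_add_le_mdist p q).trans_lt (h p hp q hq)
  obtain ⟨b, hb⟩ := exists_forall_mem_Ico_of_sub_lt (s := D) (f := fun p ↦ p.1 - p.2)
    fun p hp q hq ↦ (sub_sub_sub_le_mdist p q).trans_lt (h p hp q hq)
  exact ⟨a, b, fun p hp ↦ mem_diamond.2 ⟨ha p hp, hb p hp⟩⟩

end Diamond

theorem le_add_of_sq_le_mul_add_sq {m x y : ℝ} (hx : 0 ≤ x) (hy : 0 ≤ y)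
    (h : m ^ 2 ≤ x * m + y ^ 2) : m ≤ x + y := by
  by_contra! hlt
  nlinarith

section Bounds

variable {D : Finset (ℤ × ℤ)} {a b : ℤ} {k : ℕ}

theorem IsDDC.card_sq_mul_sq_le_of_subset_diamond (hD : IsDDC (D : Set (ℤ × ℤ)))
    (hsub : D ⊆ diamond a b k) (l : ℕ) :
    #D ^ 2 * l ^ 2 ≤ (k + l) ^ 2 * (#D + 2 * l ^ 2) := by
  have hsum : #(D + diamond 0 0 l) ≤ 2 * (k + l) ^ 2 := by
    rw [← card_diamond (a + 0) (b + 0)]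
    exact card_le_card ((add_subset_add_right hsub).trans (diamond_add_diamond_subset ..))
  refine Nat.le_of_mul_le_mul_left ?_ two_pos
  calc 2 * (#D ^ 2 * l ^ 2) = #D ^ 2 * #(diamond 0 0 l) := by rw [card_diamond]; ring
    _ ≤ #(D + diamond 0 0 l) * (#D + #(diamond 0 0 l)) := hD.card_sq_mul_card_le _
    _ ≤ 2 * (k + l) ^ 2 * (#D + 2 * l ^ 2) := by rw [card_diamond]; gcongr
    _ = 2 * ((k + l) ^ 2 * (#D + 2 * l ^ 2)) := by ring

theorem IsDDC.card_le_of_subset_diamond (hD : IsDDC (D : Set (ℤ × ℤ)))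
    (hsub : D ⊆ diamond a b k) {l : ℕ} (hl : 0 < l) :
    (#D : ℝ) ≤ ((k + l) / l) ^ 2 + √2 * (k + l) := by
  have hcount : (#D : ℝ) ^ 2 * l ^ 2 ≤ (k + l) ^ 2 * (#D + 2 * l ^ 2) := by
    exact_mod_cast hD.card_sq_mul_sq_le_of_subset_diamond hsub l
  refine le_add_of_sq_le_mul_add_sq (by positivity) (by positivity) ?_
  have hl' : (0 : ℝ) < l := by exact_mod_cast hl
  refine le_of_mul_le_mul_right (hcount.trans_eq ?_) (pow_pos hl' 2)
  rw [mul_pow, Real.sq_sqrt zero_le_two]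
  field_simp

end Bounds

theorem exists_sq_div_add_sqrt_two_mul_le {r k : ℝ} (hr : 1 ≤ r) (hk : 0 ≤ k)
    (hkr : k ≤ r / 2 + 1) :
    ∃ l : ℕ, 0 < l ∧
      ((k + l) / l) ^ 2 + √2 * (k + l) ≤ r / √2 + 17 * r ^ ((2 : ℝ) / 3) := by
  set t : ℝ := r ^ ((2 : ℝ) / 3)
  have ht_one : 1 ≤ t := Real.one_le_rpow hr (by norm_num)
  have ht_le : t ≤ r := Real.rpow_le_self_of_one_le hr (by norm_num)
  have ht_cube : t ^ 3 = r ^ 2 := by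
    rw [← Real.rpow_mul_natCast (by positivity), ← Real.rpow_natCast]
    norm_num
  have hl_ge : t ≤ ⌈t⌉₊ := Nat.le_ceil t
  have hl_le : (⌈t⌉₊ : ℝ) ≤ 2 * t := by linarith [Nat.ceil_lt_add_one (zero_le_one.trans ht_one)]
  refine ⟨⌈t⌉₊, Nat.ceil_pos.2 (by positivity), ?_⟩
  have hratio : ((k + ⌈t⌉₊) / ⌈t⌉₊) ^ 2 ≤ 49 / 4 * t :=
    calc ((k + ⌈t⌉₊) / ⌈t⌉₊) ^ 2 ≤ (7 / 2 * r / t) ^ 2 := by gcongr; linarith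
      _ = 49 / 4 * t ^ 3 / t ^ 2 := by rw [ht_cube]; ring
      _ = 49 / 4 * t := by field_simp
  have hlinear : √2 * (k + ⌈t⌉₊) ≤ r / √2 + 9 / 2 * t :=
    calc √2 * (k + ⌈t⌉₊) ≤ √2 * (r / 2 + 3 * t) := by gcongr √2 * ?_; linarith
      _ = r / √2 + √2 * (3 * t) := by rw [div_eq_mul_inv r √2, ← Real.sqrt_div_self]; ring
      _ ≤ r / √2 + 3 / 2 * (3 * t) := by
        gcongr
        exact Real.sqrt_two_lt_three_halves.le
      _ = r / √2 + 9 / 2 * t := by ring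
  linarith

/-- Upper bound for `DD̄(m,r)`: every distinct difference configuration with pairwise
Manhattan distance at most `r` has at most `r/√2 + C·r^(2/3)` dots. -/
theorem stmt_6 :
    ∃ C : ℝ, 0 < C ∧ ∀ r : ℕ, 0 < r → ∀ D : Finset (ℤ × ℤ), IsDDC (D : Set (ℤ × ℤ)) →
      (∀ p ∈ D, ∀ q ∈ D, mdist p q ≤ (r : ℤ)) →
      (D.card : ℝ) ≤ (r : ℝ) / Real.sqrt 2 + C * (r : ℝ) ^ ((2 : ℝ) / 3) := by
  refine ⟨17, by norm_num, fun r hr D hD hdist ↦ ?_⟩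
  obtain ⟨a, b, hsub⟩ : ∃ a b, D ⊆ diamond a b (r / 2 + 1) :=
    exists_subset_diamond_of_mdist_lt fun p hp q hq ↦ (hdist p hp q hq).trans_lt (by omega)
  have hside : ((r / 2 + 1 : ℕ) : ℝ) ≤ r / 2 + 1 := by
    push_cast
    gcongr
    exact Nat.cast_div_le
  obtain ⟨l, hl, hopt⟩ :=
    exists_sq_div_add_sqrt_two_mul_le (by exact_mod_cast hr) (Nat.cast_nonneg _) hside
  exact (hD.card_le_of_subset_diamond hsub hl).trans hopt
end

section
/- There is a constant C > 0 such that for every positive integer r, every distinct difference configuration D ⊆ ℤ² whose points have pairwise hexagonal distance at most r satisfies |D| ≤ (√3/2)·r + C·r^(2/3). -/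
/-- Hexagonal (grid) distance on ℤ². -/
def hdist (p q : ℤ × ℤ) : ℤ :=
  if 0 ≤ (q.1 - p.1) * (q.2 - p.2) then max |q.1 - p.1| |q.2 - p.2|
  else |q.1 - p.1| + |q.2 - p.2|

/-!
In a distinct difference configuration `D` every nonzero difference occurs at most once, so the
additive energy of `D` with any finite window `W` is at most `#W * (#D + #W)`. By Cauchy–Schwarz,
`#D ^ 2 * #W ≤ #(D + W) * (#D + #W)`. If `D` has hexagonal diameter `r` and `W` is a square of
side `K`, then `D + W` lies in a hexagon of width about `r + 2 * K`, which has about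
`3 / 4 * (r + 2 * K) ^ 2` points. This gives `#D ≤ √3 / 2 * r + O(K + (r / K) ^ 2)`, and the two
error terms balance at `K ≈ r ^ (2 / 3)`.
-/

section

open Finset
open scoped Pointwise

namespace IsDDC

variable {G : Type*} [AddCommGroup G] [DecidableEq G] {D : Finset G}

lemma card_filter_sub_eq_le_one (hD : IsDDC (D : Set G)) {g : G} (hg : g ≠ 0) :
    #{p ∈ D ×ˢ D | p.1 - p.2 = g} ≤ 1 := by
  rw [card_le_one]
  rintro ⟨a₁, a₂⟩ ha ⟨b₁, b₂⟩ hb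
  simp only [mem_filter, mem_product] at ha hb
  obtain ⟨⟨ha₁, ha₂⟩, ha_sub⟩ := ha
  obtain ⟨⟨hb₁, hb₂⟩, hb_sub⟩ := hb
  have ha_ne : a₁ ≠ a₂ := sub_ne_zero.mp (ha_sub ▸ hg)
  obtain ⟨rfl, rfl⟩ := hD a₂ ha₂ a₁ ha₁ b₂ hb₂ b₁ hb₁ (ha_sub.trans hb_sub.symm) ha_ne
  rfl

lemma card_filter_sub_eq_le (hD : IsDDC (D : Set G)) (g : G) :
    #{p ∈ D ×ˢ D | p.1 - p.2 = g} ≤ (if g = 0 then #D else 0) + 1 := by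
  split_ifs with hg
  · have hdiag : {p ∈ D ×ˢ D | p.1 - p.2 = g} = D.diag := by
      ext p
      simp only [hg, sub_eq_zero, mem_filter, mem_product, mem_diag]
      grind
    rw [hdiag, diag_card]
    exact Nat.le_succ _
  · simpa using hD.card_filter_sub_eq_le_one hg

lemma addEnergy_le_s7 (hD : IsDDC (D : Set G)) (W : Finset G) :
    D.addEnergy W ≤ #W * (#D + #W) := by
  have hfiber (w : G × G) :
      #{p ∈ D ×ˢ D | p.1 + w.1 = p.2 + w.2} ≤ (if w.1 = w.2 then #D else 0) + 1 := by
    simpa only [sub_eq_sub_iff_add_eq_add, add_comm w.2, sub_eq_zero, eq_comm (a := w.2)]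
      using hD.card_filter_sub_eq_le (w.2 - w.1)
  calc D.addEnergy W
      = ∑ w ∈ W ×ˢ W, #{p ∈ D ×ˢ D | p.1 + w.1 = p.2 + w.2} := by
        simp only [addEnergy, card_filter, sum_product_right]
    _ ≤ ∑ w ∈ W ×ˢ W, ((if w.1 = w.2 then #D else 0) + 1) := sum_le_sum fun w _ ↦ hfiber w
    _ = #W * (#D + #W) := by
        simp only [sum_add_distrib, sum_product, sum_ite_eq, sum_ite_mem, inter_self, sum_const,
          card_product, smul_eq_mul, mul_one]
        ring

theorem sq_card_mul_card_le (hD : IsDDC (D : Set G)) (W : Finset G) :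
    #D ^ 2 * #W ≤ #(D + W) * (#D + #W) := by
  obtain rfl | hW := W.eq_empty_or_nonempty
  · simp
  refine le_of_mul_le_mul_right ?_ hW.card_pos
  calc #D ^ 2 * #W * #W = #D ^ 2 * #W ^ 2 := by ring
    _ ≤ #(D + W) * D.addEnergy W := le_card_add_mul_addEnergy D W
    _ ≤ #(D + W) * (#W * (#D + #W)) := by gcongr; exact hD.addEnergy_le_s7 W
    _ = #(D + W) * (#D + #W) * #W := by ring

end IsDDC

/-- The lattice hexagon with offsets `a`, `b`, `c` and width `s`: the points whose two
coordinates, and the difference of these, range over integer intervals of length `s` starting at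
`a`, `b` and `c`. The offsets are arbitrary, so the hexagon may be irregular or even empty. -/
noncomputable def hexagon (a b c : ℤ) (s : ℕ) : Finset (ℤ × ℤ) :=
  {t ∈ Icc a (a + s) ×ˢ Icc b (b + s) | c ≤ t.1 - t.2 ∧ t.1 - t.2 ≤ c + s}

lemma mem_hexagon {a b c : ℤ} {s : ℕ} {t : ℤ × ℤ} :
    t ∈ hexagon a b c s ↔ (a ≤ t.1 ∧ t.1 ≤ a + s) ∧ (b ≤ t.2 ∧ t.2 ≤ b + s) ∧
      c ≤ t.1 - t.2 ∧ t.1 - t.2 ≤ c + s := by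
  simp only [hexagon, mem_filter, mem_product, mem_Icc, and_assoc]

lemma card_hexagon_column_le (a b c : ℤ) (s i : ℕ) :
    (#{t ∈ hexagon a b c s | (t.1 - a).toNat = i} : ℤ) ≤
      max 0 (s + 1 - |(i : ℤ) - (c + s + b - a)|) := by
  have hcard : #{t ∈ hexagon a b c s | (t.1 - a).toNat = i} ≤
      #(Icc (max b (a + i - c - s)) (min (b + s) (a + i - c))) := by
    refine card_le_card_of_injOn Prod.snd ?_ ?_
    · intro t ht
      simp only [coe_filter, Set.mem_ofPred_eq, mem_hexagon] at ht
      simp only [coe_Icc, Set.mem_Icc]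
      omega
    · intro t ht u hu htu
      simp only [coe_filter, Set.mem_ofPred_eq, mem_hexagon] at ht hu
      exact Prod.ext (by omega) htu
  rw [Int.card_Icc] at hcard
  grind

-- Averaging a column with its mirror image removes the dependence on the offset `e`.
lemma max_sub_abs_add_reflect_le {s i : ℤ} (hi : 0 ≤ i) (his : i ≤ s) (e : ℤ) :
    max 0 (s + 1 - |i - e|) + max 0 (s + 1 - |s - i - e|) ≤ 2 * (s + 1) - |s - 2 * i| := by
  have htriangle : |s - 2 * i| ≤ |i - e| + |s - i - e| := by grind
  have hwidth : |s - 2 * i| ≤ s := abs_le.mpr ⟨by linarith, by linarith⟩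
  have hleft : 0 ≤ |i - e| := abs_nonneg _
  have hright : 0 ≤ |s - i - e| := abs_nonneg _
  rcases max_cases 0 (s + 1 - |i - e|) with ⟨hmax, _⟩ | ⟨hmax, _⟩ <;>
    rcases max_cases 0 (s + 1 - |s - i - e|) with ⟨hmax', _⟩ | ⟨hmax', _⟩ <;>
    linarith

lemma mul_add_two_le_two_mul_sum_abs (s : ℕ) :
    (s : ℤ) * (s + 2) ≤ 2 * ∑ i ∈ range (s + 1), |(s : ℤ) - 2 * i| := by
  induction s using Nat.twoStepInduction with
  | zero => simp
  | one => simp [sum_range_succ]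
  | more n ih _ =>
    have hinner : ∑ i ∈ range (n + 1), |((n + 2 : ℕ) : ℤ) - 2 * ((i + 1 : ℕ) : ℤ)| =
        ∑ i ∈ range (n + 1), |(n : ℤ) - 2 * i| :=
      sum_congr rfl fun i _ ↦ by push_cast; ring_nf
    have hfirst : |((n + 2 : ℕ) : ℤ) - 2 * ((0 : ℕ) : ℤ)| = n + 2 := by grind
    have hlast : |((n + 2 : ℕ) : ℤ) - 2 * ((n + 1 + 1 : ℕ) : ℤ)| = n + 2 := by grind
    rw [sum_range_succ, sum_range_succ', hinner, hfirst, hlast]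
    push_cast
    linarith

theorem four_mul_card_hexagon_le (a b c : ℤ) (s : ℕ) :
    4 * #(hexagon a b c s) ≤ 3 * (s + 1) ^ 2 + 1 := by
  let column (i : ℕ) : ℤ := #{t ∈ hexagon a b c s | (t.1 - a).toNat = i}
  have hsum : (#(hexagon a b c s) : ℤ) = ∑ i ∈ range (s + 1), column i := by
    rw [card_eq_sum_card_fiberwise (f := fun t ↦ (t.1 - a).toNat) (t := range (s + 1))]
    · exact Nat.cast_sum _ _
    · intro t ht
      rw [mem_coe, mem_hexagon] at ht
      simp only [coe_range, Set.mem_Iio]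
      omega
  have hpair : ∀ i ∈ range (s + 1),
      column i + column (s + 1 - 1 - i) ≤ 2 * ((s : ℤ) + 1) - |(s : ℤ) - 2 * i| := by
    intro i hi
    have his : i ≤ s := mem_range_succ_iff.mp hi
    have hreflect := card_hexagon_column_le a b c s (s - i)
    rw [Nat.cast_sub his] at hreflect
    exact (add_le_add (card_hexagon_column_le a b c s i) hreflect).trans <|
      max_sub_abs_add_reflect_le (by positivity) (by exact_mod_cast his) _
  have htotal : 2 * (#(hexagon a b c s) : ℤ) ≤
      2 * ((s : ℤ) + 1) ^ 2 - ∑ i ∈ range (s + 1), |(s : ℤ) - 2 * i| := by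
    calc 2 * (#(hexagon a b c s) : ℤ)
        = ∑ i ∈ range (s + 1), (column i + column (s + 1 - 1 - i)) := by
          rw [sum_add_distrib, sum_range_reflect, hsum, two_mul]
      _ ≤ ∑ i ∈ range (s + 1), (2 * ((s : ℤ) + 1) - |(s : ℤ) - 2 * i|) := sum_le_sum hpair
      _ = 2 * ((s : ℤ) + 1) ^ 2 - ∑ i ∈ range (s + 1), |(s : ℤ) - 2 * i| := by
          rw [sum_sub_distrib, sum_const, card_range, nsmul_eq_mul]
          push_cast
          ring
  zify
  linarith [mul_add_two_le_two_mul_sum_abs s]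

/-- The lattice square of side `k` at the origin, used as the window that is slid over a
configuration. It has `(k + 1) ^ 2` points. -/
noncomputable def square (k : ℕ) : Finset (ℤ × ℤ) :=
  Icc (0 : ℤ) k ×ˢ Icc (0 : ℤ) k

lemma card_square (k : ℕ) : #(square k) = (k + 1) ^ 2 := by
  rw [square, card_product, Int.card_Icc, sq]
  congr

lemma hexagon_add_square_subset (a b c : ℤ) (s k : ℕ) :
    hexagon a b c s + square k ⊆ hexagon a b (c - k) (s + 2 * k) := by
  intro t ht
  obtain ⟨x, hx, w, hw, rfl⟩ := mem_add.mp ht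
  simp only [square, mem_hexagon, mem_product, mem_Icc, Prod.fst_add, Prod.snd_add] at hx hw ⊢
  omega

lemma hdist_eq_max (p q : ℤ × ℤ) :
    hdist p q = max (max |q.1 - p.1| |q.2 - p.2|) |(q.1 - q.2) - (p.1 - p.2)| := by
  have hdiff : (q.1 - q.2) - (p.1 - p.2) = (q.1 - p.1) - (q.2 - p.2) := by ring
  rw [hdist, hdiff]
  generalize q.1 - p.1 = x
  generalize q.2 - p.2 = y
  split_ifs with hxy
  · obtain ⟨hx, hy⟩ | ⟨hx, hy⟩ := mul_nonneg_iff.mp hxy <;> grind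
  · obtain ⟨hx, hy⟩ | ⟨hx, hy⟩ := mul_neg_iff.mp (not_le.mp hxy) <;> grind

lemma exists_subset_hexagon {D : Finset (ℤ × ℤ)} {r : ℕ}
    (hr : ∀ p ∈ D, ∀ q ∈ D, hdist p q ≤ r) : ∃ a b c, D ⊆ hexagon a b c r := by
  obtain rfl | hne := D.eq_empty_or_nonempty
  · exact ⟨0, 0, 0, empty_subset _⟩
  obtain ⟨p, hp, hp_min⟩ := D.exists_min_image Prod.fst hne
  obtain ⟨q, hq, hq_min⟩ := D.exists_min_image Prod.snd hne
  obtain ⟨u, hu, hu_min⟩ := D.exists_min_image (fun t ↦ t.1 - t.2) hne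
  refine ⟨p.1, q.2, u.1 - u.2, fun x hx ↦ ?_⟩
  have hpx := hr p hp x hx
  have hqx := hr q hq x hx
  have hux := hr u hu x hx
  simp only [hdist_eq_max, max_le_iff, abs_le] at hpx hqx hux
  have hp_le := hp_min x hx
  have hq_le := hq_min x hx
  have hu_le := hu_min x hx
  rw [mem_hexagon]
  omega

lemma four_mul_card_add_square_le {D : Finset (ℤ × ℤ)} {r : ℕ}
    (hr : ∀ p ∈ D, ∀ q ∈ D, hdist p q ≤ r) (k : ℕ) :
    4 * #(D + square k) ≤ 3 * (r + 2 * (k + 1)) ^ 2 := by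
  obtain ⟨a, b, c, hD⟩ := exists_subset_hexagon hr
  calc 4 * #(D + square k)
      ≤ 4 * #(hexagon a b (c - k) (r + 2 * k)) := by
        gcongr
        exact (add_subset_add_right hD).trans (hexagon_add_square_subset a b c r k)
    _ ≤ 3 * (r + 2 * k + 1) ^ 2 + 1 := four_mul_card_hexagon_le a b (c - k) (r + 2 * k)
    _ ≤ 3 * (r + 2 * (k + 1)) ^ 2 := by ring_nf; omega

lemma IsDDC.four_mul_sq_card_mul_sq_le {D : Finset (ℤ × ℤ)} (hD : IsDDC (D : Set (ℤ × ℤ))) {r : ℕ}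
    (hr : ∀ p ∈ D, ∀ q ∈ D, hdist p q ≤ r) (k : ℕ) :
    4 * (#D ^ 2 * (k + 1) ^ 2) ≤ 3 * (r + 2 * (k + 1)) ^ 2 * (#D + (k + 1) ^ 2) := by
  have henergy := hD.sq_card_mul_card_le (square k)
  rw [card_square] at henergy
  calc 4 * (#D ^ 2 * (k + 1) ^ 2)
      ≤ 4 * (#(D + square k) * (#D + (k + 1) ^ 2)) := by gcongr
    _ = 4 * #(D + square k) * (#D + (k + 1) ^ 2) := by ring
    _ ≤ 3 * (r + 2 * (k + 1)) ^ 2 * (#D + (k + 1) ^ 2) := by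
        gcongr ?_ * _
        exact four_mul_card_add_square_le hr k

end

lemma le_add_of_sq_le_sq_add_mul {R : Type*} [CommRing R] [LinearOrder R] [IsStrictOrderedRing R]
    {m A B : R} (hA : 0 ≤ A) (hB : 0 ≤ B) (h : m ^ 2 ≤ A ^ 2 + B * m) : m ≤ A + B := by
  by_contra! hlt
  have hmB : A * m < (m - B) * m := mul_lt_mul_of_pos_right (by linarith) (by linarith)
  have hAm : A * A ≤ A * m := mul_le_mul_of_nonneg_left (by linarith) hA
  linarith

theorem IsDDC.card_le_of_hdist_le {D : Finset (ℤ × ℤ)} (hD : IsDDC (D : Set (ℤ × ℤ))) {r : ℕ}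
    (hr : ∀ p ∈ D, ∀ q ∈ D, hdist p q ≤ r) (k : ℕ) :
    (D.card : ℝ) ≤ √3 / 2 * (r + 2 * (k + 1)) + 3 / 4 * (r / (k + 1) + 2) ^ 2 := by
  refine le_add_of_sq_le_sq_add_mul (by positivity) (by positivity) ?_
  have hmain : 4 * ((D.card : ℝ) ^ 2 * (k + 1) ^ 2) ≤
      3 * (r + 2 * (k + 1)) ^ 2 * (D.card + (k + 1) ^ 2) := by
    exact_mod_cast hD.four_mul_sq_card_mul_sq_le hr k
  refine le_of_mul_le_mul_right ?_ (by positivity : (0 : ℝ) < 4 * (k + 1) ^ 2)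
  calc (D.card : ℝ) ^ 2 * (4 * (k + 1) ^ 2) = 4 * ((D.card : ℝ) ^ 2 * (k + 1) ^ 2) := by ring
    _ ≤ 3 * ((r : ℝ) + 2 * (k + 1)) ^ 2 * (D.card + (k + 1) ^ 2) := hmain
    _ = ((√3 / 2 * (r + 2 * (k + 1))) ^ 2 + 3 / 4 * (r / (k + 1) + 2) ^ 2 * D.card) *
          (4 * (k + 1) ^ 2) := by
        rw [mul_pow, div_pow, Real.sq_sqrt (by norm_num)]
        field_simp
        ring

lemma window_bound_le {ρ : ℝ} (hρ : 1 ≤ ρ) :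
    √3 / 2 * (ρ ^ 3 + 2 * (⌊ρ ^ 2⌋₊ + 1)) + 3 / 4 * (ρ ^ 3 / (⌊ρ ^ 2⌋₊ + 1) + 2) ^ 2 ≤
      √3 / 2 * ρ ^ 3 + 11 * ρ ^ 2 := by
  have hρ_sq : 1 ≤ ρ ^ 2 := one_le_pow₀ hρ
  have hside : (⌊ρ ^ 2⌋₊ : ℝ) + 1 ≤ 2 * ρ ^ 2 := by linarith [Nat.floor_le (sq_nonneg ρ)]
  have hquot : ρ ^ 3 / (⌊ρ ^ 2⌋₊ + 1) ≤ ρ := by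
    rw [div_le_iff₀ (by positivity), pow_succ']
    gcongr
    exact (Nat.lt_floor_add_one _).le
  have hsqrt : √3 ≤ 2 := Real.sqrt_le_iff.mpr (by norm_num)
  have hlinear : √3 * (⌊ρ ^ 2⌋₊ + 1) ≤ 2 * (2 * ρ ^ 2) := by gcongr
  have hquadratic : (ρ ^ 3 / (⌊ρ ^ 2⌋₊ + 1) + 2) ^ 2 ≤ (ρ + 2 * ρ) ^ 2 := by
    gcongr
    linarith
  linarith

/-- Upper bound for `DD̄*(m,r)`: every distinct difference configuration with pairwise
hexagonal distance at most `r` has at most `(√3/2)·r + C·r^(2/3)` dots. -/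
theorem stmt_7 :
    ∃ C : ℝ, 0 < C ∧ ∀ r : ℕ, 0 < r → ∀ D : Finset (ℤ × ℤ), IsDDC (D : Set (ℤ × ℤ)) →
      (∀ p ∈ D, ∀ q ∈ D, hdist p q ≤ (r : ℤ)) →
      (D.card : ℝ) ≤ Real.sqrt 3 / 2 * (r : ℝ) + C * (r : ℝ) ^ ((2 : ℝ) / 3) := by
  refine ⟨11, by norm_num, fun r hr D hD hdiam ↦ ?_⟩
  set ρ : ℝ := (r : ℝ) ^ ((1 : ℝ) / 3) with hρ
  have hρ_one : 1 ≤ ρ := Real.one_le_rpow (by exact_mod_cast hr) (by norm_num)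
  have hρ_cube : (r : ℝ) = ρ ^ 3 := by
    rw [hρ, ← Real.rpow_mul_natCast (by positivity)]
    norm_num
  have hρ_sq : (r : ℝ) ^ ((2 : ℝ) / 3) = ρ ^ 2 := by
    rw [hρ, ← Real.rpow_mul_natCast (by positivity)]
    norm_num
  have hcard := hD.card_le_of_hdist_le hdiam ⌊ρ ^ 2⌋₊
  rw [hρ_sq, hρ_cube]
  rw [hρ_cube] at hcard
  exact hcard.trans (window_bound_le hρ_one)
end

section
/- Let p be a prime and let α be a primitive root modulo p. Let A = {(i,j) ∈ ℤ² : α^i ≡ j (mod p)} (where α^i is computed in the group of units of ℤ/pℤ, so that negative exponents are allowed). Then: (1) for all (i,j) ∈ ℤ², (i,j) ∈ A if and only if (i+p−1, j) ∈ A, if and only if (i, j+p) ∈ A; (2) for all i₀, j₀ ∈ ℤ, the set A ∩ ({i₀, i₀+1, …, i₀+p−2} × {j₀, j₀+1, …, j₀+p−1}) contains exactly p−1 points and is a distinct difference configuration. -/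
/-!
In a ring `R` without zero divisors the points `(u, u)` form a distinct difference configuration
in `Rˣ × R`, where differences are quotients in the first coordinate: if `u₂ = c u₁`, `v₂ = c v₁`
and `u₂ - u₁ = v₂ - v₁`, then `(c - 1) (u₁ - v₁) = 0`. The homomorphism `(i, j) ↦ (α ^ i, j)` from
`ℤ × ℤ` to `Rˣ × R` sends the dots of the Welch array to such points and is injective on every
window of one period, so the property pulls back to the window.
-/

open Set

theorem eq_of_modEq_of_mem_Ico {n a b c : ℤ} (hab : a ≡ b [ZMOD n]) (ha : a ∈ Ico c (c + n))
    (hb : b ∈ Ico c (c + n)) : a = b := by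
  have habs : |b - a| < n := abs_lt.mpr (by grind)
  exact (sub_eq_zero.mp (Int.eq_zero_of_abs_lt_dvd hab.dvd habs)).symm

theorem zpow_injOn_Ico {G : Type*} [Group G] (g : G) (a : ℤ) :
    InjOn (fun i : ℤ ↦ g ^ i) (Ico a (a + orderOf g)) :=
  fun _ hi _ hj hij ↦ eq_of_modEq_of_mem_Ico (zpow_eq_zpow_iff_modEq.mp hij) hi hj

theorem intCast_injOn_Ico {R : Type*} [AddGroupWithOne R] (n : ℕ) [CharP R n] (a : ℤ) :
    InjOn (Int.cast : ℤ → R) (Ico a (a + n)) :=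
  fun _ hi _ hj hij ↦ eq_of_modEq_of_mem_Ico ((CharP.intCast_eq_intCast R n).mp hij) hi hj

theorem exists_mem_Ico_intCast_eq {n : ℕ} [NeZero n] (a : ℤ) (x : ZMod n) :
    ∃ j ∈ Ico a (a + n), (j : ZMod n) = x := by
  have hlt := ZMod.val_lt (x - (a : ZMod n))
  exact ⟨a + (x - (a : ZMod n)).val, ⟨by lia, by lia⟩, by simp⟩

theorem ncard_setOf_eq_intCast_inter_prod_Ico {ι : Type*} {n : ℕ} [NeZero n] (f : ι → ZMod n)
    (s : Set ι) (a : ℤ) :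
    ({v : ι × ℤ | f v.1 = v.2} ∩ s ×ˢ Ico a (a + n)).ncard = s.ncard := by
  refine BijOn.ncard_eq (f := Prod.fst) ⟨fun v hv ↦ hv.2.1, ?_, ?_⟩
  · rintro ⟨i, j⟩ ⟨hj, -, hjmem⟩ ⟨_, k⟩ ⟨hk, -, hkmem⟩ rfl
    exact congrArg (Prod.mk i) (intCast_injOn_Ico n a hjmem hkmem (hj.symm.trans hk))
  · intro i hi
    obtain ⟨j, hjmem, hj⟩ := exists_mem_Ico_intCast_eq a (f i)
    exact ⟨(i, j), ⟨hj.symm, hi, hjmem⟩, rfl⟩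

theorem IsDDC.of_mapsTo_of_injOn {G H : Type*} [AddGroup G] [AddGroup H] {D : Set G} {E : Set H}
    (hE : IsDDC E) (f : G →+ H) (hmaps : MapsTo f D E) (hinj : InjOn f D) : IsDDC D := by
  intro p₁ hp₁ p₂ hp₂ q₁ hq₁ q₂ hq₂ hdiff hne
  have hdiff' : f p₂ - f p₁ = f q₂ - f q₁ := by rw [← map_sub, ← map_sub, hdiff]
  obtain ⟨h₁, h₂⟩ := hE _ (hmaps hp₁) _ (hmaps hp₂) _ (hmaps hq₁) _ (hmaps hq₂) hdiff'
    (hinj.ne hp₂ hp₁ hne)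
  exact ⟨hinj hp₁ hq₁ h₁, hinj hp₂ hq₂ h₂⟩

section Ring

variable {R : Type*} [Ring R]

theorem units_eq_of_div_eq_of_sub_eq [NoZeroDivisors R] {u₁ u₂ v₁ v₂ : Rˣ}
    (hdiv : u₂ / u₁ = v₂ / v₁) (hsub : (u₂ - u₁ : R) = v₂ - v₁) (hne : u₂ ≠ u₁) : u₁ = v₁ := by
  set c := u₂ / u₁
  have hu : u₂ = c * u₁ := (div_mul_cancel u₂ u₁).symm
  have hv : v₂ = c * v₁ := by rw [hdiv, div_mul_cancel]
  have hc_ne : (c - 1 : R) ≠ 0 := by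
    rw [sub_ne_zero, Ne, Units.val_eq_one]
    exact div_ne_one.mpr hne
  have hmul : (c - 1 : R) * (u₁ - v₁) = 0 := by
    rw [hu, hv, Units.val_mul, Units.val_mul] at hsub
    rw [mul_sub, sub_one_mul, sub_one_mul, hsub, sub_self]
  exact Units.ext (sub_eq_zero.mp ((mul_eq_zero.mp hmul).resolve_left hc_ne))

theorem isDDC_range_units_val [NoZeroDivisors R] :
    IsDDC (range fun u : Additive Rˣ ↦ (u, (u.toMul : R))) := by
  rintro _ ⟨u₁, rfl⟩ _ ⟨u₂, rfl⟩ _ ⟨v₁, rfl⟩ _ ⟨v₂, rfl⟩ hdiff hne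
  obtain ⟨hdiv, hsub⟩ := Prod.ext_iff.mp hdiff
  have h₁ : u₁ = v₁ := units_eq_of_div_eq_of_sub_eq hdiv hsub (by rintro rfl; exact hne rfl)
  subst h₁
  have h₂ : u₂ = v₂ := sub_left_injective hdiv
  exact ⟨rfl, by rw [h₂]⟩

/-- The Welch array of a unit `α`: a dot at `(i, j)` whenever `α ^ i = j` in `R`. For `R = ZMod p`
and `α` a primitive root this is the array of the periodic Welch construction. -/
def welchArray (α : Rˣ) : Set (ℤ × ℤ) :=
  {v | ((α ^ v.1 : Rˣ) : R) = v.2}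

theorem add_orderOf_mem_welchArray_iff (α : Rˣ) (i j : ℤ) :
    (i + orderOf α, j) ∈ welchArray α ↔ (i, j) ∈ welchArray α := by
  simp [welchArray, zpow_add, pow_orderOf_eq_one]

theorem add_char_mem_welchArray_iff (n : ℕ) [CharP R n] (α : Rˣ) (i j : ℤ) :
    (i, j + n) ∈ welchArray α ↔ (i, j) ∈ welchArray α := by
  simp [welchArray]

theorem isDDC_welchArray_inter_window [NoZeroDivisors R] (n : ℕ) [CharP R n] (α : Rˣ)
    (i₀ j₀ : ℤ) :
    IsDDC (welchArray α ∩ Ico i₀ (i₀ + orderOf α) ×ˢ Ico j₀ (j₀ + n)) := by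
  let toUnitsProd : ℤ × ℤ →+ Additive Rˣ × R :=
    (zmultiplesHom _ (Additive.ofMul α)).prodMap (Int.castAddHom R)
  have hmaps : MapsTo toUnitsProd (welchArray α) (range fun u ↦ (u, (u.toMul : R))) :=
    fun _ hv ↦ ⟨_, Prod.ext rfl hv⟩
  have hinj : InjOn toUnitsProd (Ico i₀ (i₀ + orderOf α) ×ˢ Ico j₀ (j₀ + n)) :=
    (zpow_injOn_Ico α i₀).prodMap (intCast_injOn_Ico n j₀)
  exact isDDC_range_units_val.of_mapsTo_of_injOn toUnitsProd
    (hmaps.mono_left inter_subset_left) (hinj.mono inter_subset_right)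

end Ring

theorem ncard_welchArray_inter_window {n : ℕ} [NeZero n] (α : (ZMod n)ˣ) (m : ℕ) (i₀ j₀ : ℤ) :
    (welchArray α ∩ Ico i₀ (i₀ + m) ×ˢ Ico j₀ (j₀ + n)).ncard = m := by
  have hcard : (Ico i₀ (i₀ + m)).ncard = m := by simp [← Finset.coe_Ico]
  have hcolumns := ncard_setOf_eq_intCast_inter_prod_Ico
    (fun i : ℤ ↦ ((α ^ i : (ZMod n)ˣ) : ZMod n)) (Ico i₀ (i₀ + m)) j₀
  exact hcolumns.trans hcard

theorem stmt_14_general (p : ℕ) [Fact p.Prime] (α : (ZMod p)ˣ) :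
    (∀ i j : ℤ, ((i, j) ∈ welchArray α ↔ (i + orderOf α, j) ∈ welchArray α) ∧
      ((i, j) ∈ welchArray α ↔ (i, j + p) ∈ welchArray α)) ∧
    ∀ i₀ j₀ : ℤ,
      (welchArray α ∩ Ico i₀ (i₀ + orderOf α) ×ˢ Ico j₀ (j₀ + p)).ncard = orderOf α ∧
      IsDDC (welchArray α ∩ Ico i₀ (i₀ + orderOf α) ×ˢ Ico j₀ (j₀ + p)) :=
  ⟨fun i j ↦ ⟨(add_orderOf_mem_welchArray_iff α i j).symm,
      (add_char_mem_welchArray_iff p α i j).symm⟩,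
    fun i₀ j₀ ↦ ⟨ncard_welchArray_inter_window α _ i₀ j₀,
      isDDC_welchArray_inter_window p α i₀ j₀⟩⟩

theorem orderOf_eq_sub_one_of_forall_mem_zpowers {p : ℕ} [Fact p.Prime] {α : (ZMod p)ˣ}
    (hα : ∀ u : (ZMod p)ˣ, u ∈ Subgroup.zpowers α) : orderOf α = p - 1 := by
  rw [orderOf_eq_card_of_forall_mem_zpowers hα, Nat.card_eq_fintype_card, ZMod.card_units]

theorem sep_window_eq_inter_prod_Ico (A : Set (ℤ × ℤ)) (i₀ j₀ m n : ℤ) :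
    {v ∈ A | i₀ ≤ v.1 ∧ v.1 ≤ i₀ + m - 2 ∧ j₀ ≤ v.2 ∧ v.2 ≤ j₀ + n - 1} =
      A ∩ Ico i₀ (i₀ + (m - 1)) ×ˢ Ico j₀ (j₀ + n) := by
  grind

/-- The Periodic Welch construction: for a prime `p` and a primitive root `α` mod `p`, the
array `A = {(i,j) : α^i ≡ j (mod p)}` is periodic with period `(p−1, p)`, and every
`p × (p−1)` window contains exactly `p−1` dots and is a distinct difference
configuration. -/
theorem stmt_14 (p : ℕ) (hp : p.Prime) (α : (ZMod p)ˣ)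
    (hα : ∀ u : (ZMod p)ˣ, u ∈ Subgroup.zpowers α) :
    let A : Set (ℤ × ℤ) := {v | ((α ^ v.1 : (ZMod p)ˣ) : ZMod p) = (v.2 : ZMod p)}
    (∀ i j : ℤ, ((i, j) ∈ A ↔ (i + (p : ℤ) - 1, j) ∈ A) ∧
      ((i, j) ∈ A ↔ (i, j + (p : ℤ)) ∈ A)) ∧
    ∀ i₀ j₀ : ℤ,
      {v ∈ A | i₀ ≤ v.1 ∧ v.1 ≤ i₀ + (p : ℤ) - 2 ∧ j₀ ≤ v.2 ∧ v.2 ≤ j₀ + (p : ℤ) - 1}.ncard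
        = p - 1 ∧
      IsDDC {v ∈ A | i₀ ≤ v.1 ∧ v.1 ≤ i₀ + (p : ℤ) - 2 ∧ j₀ ≤ v.2 ∧ v.2 ≤ j₀ + (p : ℤ) - 1} := by
  have : Fact p.Prime := ⟨hp⟩
  simpa only [welchArray, orderOf_eq_sub_one_of_forall_mem_zpowers hα, Nat.cast_pred hp.pos,
    ← add_sub_assoc, sep_window_eq_inter_prod_Ico] using stmt_14_general p α
end

section
/- Let q ≥ 3 be a prime power and let α and β be primitive elements of the finite field GF(q). Let A = {(i,j) ∈ ℤ² : α^i + β^j = 1} (where α^i and β^j are computed in the multiplicative group GF(q)ˣ, so that negative exponents are allowed). Then: (1) for all (i,j) ∈ ℤ², (i,j) ∈ A if and only if (i+q−1, j) ∈ A, if and only if (i, j+q−1) ∈ A; (2) for all i₀, j₀ ∈ ℤ, the set A ∩ ({i₀, i₀+1, …, i₀+q−2} × {j₀, j₀+1, …, j₀+q−2}) contains exactly q−2 points and is a distinct difference configuration. -/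
/-!
In the torus `Fˣ × Fˣ` the line `x + y = 1` has pairwise distinct quotients: if `(x, y)` and
`(s * x, t * y)` both lie on it, then either `s = t = 1`, or `s ≠ t` and the point `(x, y)` is the
unique common solution of `x + y = 1` and `s * x + t * y = 1`. Projection to `x` identifies the
line with `F \ {0, 1}`. The homomorphism `(i, j) ↦ (α ^ i, β ^ j)` maps each window of side
`q - 1` bijectively onto the torus, and `A` is the preimage of the line.
-/

open Set

theorem IsDDC.inter_preimage {G H : Type*} [AddGroup G] [AddGroup H] {D : Set H} (hD : IsDDC D)
    (f : G →+ H) {S : Set G} (hf : InjOn f S) : IsDDC (S ∩ f ⁻¹' D) := by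
  rintro p₁ ⟨hp₁, hp₁D⟩ p₂ ⟨hp₂, hp₂D⟩ q₁ ⟨hq₁, hq₁D⟩ q₂ ⟨hq₂, hq₂D⟩ hsub hne
  have hfsub : f p₂ - f p₁ = f q₂ - f q₁ := by rw [← map_sub, hsub, map_sub]
  obtain ⟨h₁, h₂⟩ := hD _ hp₁D _ hp₂D _ hq₁D _ hq₂D hfsub (hf.ne hp₂ hp₁ hne)
  exact ⟨hf hp₁ hq₁ h₁, hf hp₂ hq₂ h₂⟩

section Zpow

variable {G : Type*} [Group G]

theorem zpow_add_orderOf (g : G) (n : ℤ) : g ^ (n + orderOf g) = g ^ n := by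
  rw [zpow_add, zpow_natCast, pow_orderOf_eq_one, mul_one]

theorem injOn_zpow_Ico_orderOf (g : G) (a : ℤ) :
    InjOn (fun n : ℤ ↦ g ^ n) (Ico a (a + orderOf g)) := by
  rintro m ⟨ham, hma⟩ n ⟨han, hna⟩ h
  have hdvd : (orderOf g : ℤ) ∣ m - n := orderOf_dvd_sub_iff_zpow_eq_zpow.mpr h
  exact sub_eq_zero.mp (Int.eq_zero_of_abs_lt_dvd hdvd (abs_lt.mpr ⟨by lia, by lia⟩))

theorem bijOn_zpow_Ico_orderOf {g : G} (hg : IsOfFinOrder g) (a : ℤ) :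
    BijOn (fun n : ℤ ↦ g ^ n) (Ico a (a + orderOf g)) (Subgroup.zpowers g) := by
  refine ⟨fun n _ ↦ ⟨n, rfl⟩, injOn_zpow_Ico_orderOf g a, ?_⟩
  rintro _ ⟨n, rfl⟩
  obtain ⟨m, hm, -⟩ :=
    existsUnique_add_zsmul_mem_Ico (Int.natCast_pos.mpr hg.orderOf_pos) n a
  refine ⟨n + m • (orderOf g : ℤ), hm, ?_⟩
  simp [zpow_add, zpow_mul']

/-- The homomorphism `(i, j) ↦ (α ^ i, β ^ j)`. The target is written additively because `IsDDC` is
phrased in terms of subtraction. -/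
def zpowPairHom (α β : G) : ℤ × ℤ →+ Additive G × Additive G :=
  (zmultiplesHom _ (.ofMul α)).prodMap (zmultiplesHom _ (.ofMul β))

theorem bijOn_zpowPairHom {α β : G} (hα : IsOfFinOrder α) (hβ : IsOfFinOrder β) (i₀ j₀ : ℤ) :
    BijOn (zpowPairHom α β) (Ico i₀ (i₀ + orderOf α) ×ˢ Ico j₀ (j₀ + orderOf β))
      ((Additive.toMul ⁻¹' Subgroup.zpowers α) ×ˢ (Additive.toMul ⁻¹' Subgroup.zpowers β)) :=
  (bijOn_zpow_Ico_orderOf hα i₀).prodMap (bijOn_zpow_Ico_orderOf hβ j₀)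

end Zpow

/-- The line `x + y = 1` in the torus `Rˣ × Rˣ`, with the torus written additively. -/
def unitLine (R : Type*) [Ring R] : Set (Additive Rˣ × Additive Rˣ) :=
  {p | (p.1.toMul : R) + (p.2.toMul : R) = 1}

theorem eq_and_eq_of_add_eq_one_of_mul_add_mul_eq {R : Type*} [Ring R] [NoZeroDivisors R]
    {s t x y x' y' : R}
    (hst : s ≠ t) (hxy : x + y = 1) (hxy' : x' + y' = 1) (h : s * x + t * y = s * x' + t * y') :
    x = x' ∧ y = y' := by
  obtain rfl : y = 1 - x := eq_sub_of_add_eq' hxy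
  obtain rfl : y' = 1 - x' := eq_sub_of_add_eq' hxy'
  have hmul : (s - t) * (x - x') = 0 := by
    rw [← sub_eq_zero.mpr h]
    noncomm_ring
  obtain rfl : x = x' :=
    sub_eq_zero.mp ((mul_eq_zero.mp hmul).resolve_left (sub_ne_zero.mpr hst))
  exact ⟨rfl, rfl⟩

theorem isDDC_unitLine (R : Type*) [Ring R] [NoZeroDivisors R] : IsDDC (unitLine R) := by
  intro p₁ hp₁ p₂ hp₂ q₁ hq₁ q₂ hq₂ hsub hne
  obtain ⟨d, rfl⟩ : ∃ d, p₂ = d + p₁ := ⟨p₂ - p₁, (sub_add_cancel p₂ p₁).symm⟩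
  obtain rfl : q₂ = d + q₁ := by rw [← sub_eq_iff_eq_add, ← hsub, add_sub_cancel_right]
  simp only [unitLine, mem_ofPred_eq, Prod.fst_add, Prod.snd_add, toMul_add, Units.val_mul]
    at hp₁ hp₂ hq₁ hq₂
  have hd : (d.1.toMul : R) ≠ d.2.toMul := by
    intro hd
    have hd₂ : (d.2.toMul : R) = 1 := by rwa [hd, ← mul_add, hp₁, mul_one] at hp₂
    have hd0 : d = 0 := Prod.ext (Units.ext (hd.trans hd₂)) (Units.ext hd₂)
    exact hne (by rw [hd0, zero_add])
  obtain ⟨h₁, h₂⟩ := eq_and_eq_of_add_eq_one_of_mul_add_mul_eq hd hp₁ hq₁ (hp₂.trans hq₂.symm)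
  obtain rfl : p₁ = q₁ := Prod.ext (Units.ext h₁) (Units.ext h₂)
  exact ⟨rfl, rfl⟩

theorem bijOn_fst_unitLine (K : Type*) [DivisionRing K] :
    BijOn (fun p : Additive Kˣ × Additive Kˣ ↦ (p.1.toMul : K)) (unitLine K) {0, 1}ᶜ := by
  refine ⟨?_, ?_, ?_⟩
  · rintro p (hp : (p.1.toMul : K) + p.2.toMul = 1) (h0 | h1)
    · exact Units.ne_zero _ h0
    · exact Units.ne_zero p.2.toMul (add_eq_left.mp (hp.trans h1.symm))
  · intro p (hp : (p.1.toMul : K) + p.2.toMul = 1) p' (hp' : (p'.1.toMul : K) + p'.2.toMul = 1)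
      (h : (p.1.toMul : K) = p'.1.toMul)
    have h₂ : (p.2.toMul : K) = p'.2.toMul := add_left_cancel (hp.trans (h ▸ hp'.symm))
    exact Prod.ext (Units.ext h) (Units.ext h₂)
  · intro x hx
    obtain ⟨h0, h1⟩ : x ≠ 0 ∧ x ≠ 1 := by simpa using hx
    exact ⟨(.ofMul (.mk0 x h0), .ofMul (.mk0 (1 - x) (sub_ne_zero.mpr h1.symm))),
      add_sub_cancel x 1, rfl⟩

theorem ncard_unitLine (K : Type*) [DivisionRing K] [Finite K] :
    (unitLine K).ncard = Nat.card K - 2 := by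
  rw [(bijOn_fst_unitLine K).ncard_eq, ncard_compl, ncard_pair zero_ne_one]

theorem cast_orderOf_units_eq_card_sub_one {K : Type*} [DivisionRing K] [Finite K] {g : Kˣ}
    (hg : ∀ u, u ∈ Subgroup.zpowers g) : (orderOf g : ℤ) = Nat.card K - 1 := by
  rw [orderOf_eq_card_of_forall_mem_zpowers hg, Nat.card_units, Nat.cast_pred Nat.card_pos]

/-- The Periodic Golomb construction: for a finite field `F` of order `q ≥ 3` with primitive
elements `α, β`, the array `A = {(i,j) : α^i + β^j = 1}` is periodic with period
`(q−1, q−1)`, and every `(q−1) × (q−1)` window contains exactly `q−2` dots and is a distinct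
difference configuration. -/
theorem stmt_15 (q : ℕ) (hq : 3 ≤ q) (F : Type) [Field F] [Fintype F]
    (hcard : Fintype.card F = q) (α β : Fˣ)
    (hα : ∀ u : Fˣ, u ∈ Subgroup.zpowers α) (hβ : ∀ u : Fˣ, u ∈ Subgroup.zpowers β) :
    let A : Set (ℤ × ℤ) := {v | ((α ^ v.1 : Fˣ) : F) + ((β ^ v.2 : Fˣ) : F) = 1}
    (∀ i j : ℤ, ((i, j) ∈ A ↔ (i + (q : ℤ) - 1, j) ∈ A) ∧
      ((i, j) ∈ A ↔ (i, j + (q : ℤ) - 1) ∈ A)) ∧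
    ∀ i₀ j₀ : ℤ,
      {v ∈ A | i₀ ≤ v.1 ∧ v.1 ≤ i₀ + (q : ℤ) - 2 ∧ j₀ ≤ v.2 ∧ v.2 ≤ j₀ + (q : ℤ) - 2}.ncard
        = q - 2 ∧
      IsDDC {v ∈ A | i₀ ≤ v.1 ∧ v.1 ≤ i₀ + (q : ℤ) - 2 ∧ j₀ ≤ v.2 ∧ v.2 ≤ j₀ + (q : ℤ) - 2} := by
  intro A
  rw [← Nat.card_eq_fintype_card] at hcard
  have hordα : (orderOf α : ℤ) = q - 1 := hcard ▸ cast_orderOf_units_eq_card_sub_one hα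
  have hordβ : (orderOf β : ℤ) = q - 1 := hcard ▸ cast_orderOf_units_eq_card_sub_one hβ
  refine ⟨fun i j ↦ ⟨?_, ?_⟩, fun i₀ j₀ ↦ ?_⟩
  · simp only [A, mem_ofPred_eq, add_sub_assoc, ← hordα, zpow_add_orderOf]
  · simp only [A, mem_ofPred_eq, add_sub_assoc, ← hordβ, zpow_add_orderOf]
  have hwindow :
      {v ∈ A | i₀ ≤ v.1 ∧ v.1 ≤ i₀ + (q : ℤ) - 2 ∧ j₀ ≤ v.2 ∧ v.2 ≤ j₀ + (q : ℤ) - 2} =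
        (Ico i₀ (i₀ + orderOf α) ×ˢ Ico j₀ (j₀ + orderOf β)) ∩ zpowPairHom α β ⁻¹' unitLine F := by
    ext v
    change v ∈ A ∧ _ ↔ _ ∧ v ∈ A
    simp only [mem_prod, mem_Ico]
    lia
  have hbij := bijOn_zpowPairHom (isOfFinOrder_of_finite α) (isOfFinOrder_of_finite β) i₀ j₀
  rw [hwindow]
  refine ⟨?_, (isDDC_unitLine F).inter_preimage _ hbij.injOn⟩
  have hline := hbij.subset_right (r := unitLine F) fun p _ ↦ ⟨hα p.1.toMul, hβ p.2.toMul⟩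
  rw [hline.ncard_eq, ncard_unitLine, hcard]
end

section
/- Let S ⊆ ℤ² be a finite nonempty set, let η, κ be positive integers, and let A ⊆ ℤ² be doubly periodic with period (η,κ), i.e., for all (i,j) ∈ ℤ², (i,j) ∈ A ⟺ (i+η,j) ∈ A ⟺ (i,j+κ) ∈ A. Let d = |A ∩ ({0,…,η−1} × {0,…,κ−1})| and suppose that for every v ∈ ℤ² the set A ∩ (v + S) is a distinct difference configuration. Then there exists a subset D ⊆ S that is a distinct difference configuration with |D| ≥ ⌈(d/(η·κ))·|S|⌉. -/
/-!
Average over the translates `v + S`, where `v` runs through a window `W`, a set of representatives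
for the lattice of periods. Since `A` is periodic, each `s ∈ S` satisfies `v + s ∈ A` for at
least as many `v ∈ W` as `A` has points in `W`, namely `d`. Hence the sets `{s ∈ S | v + s ∈ A}`
have average size at least `d * |S| / |W|`, and one of them is that large. It is a translate
of the set of dots in `v + S`, so it is a distinct difference configuration.
-/

open scoped Pointwise Finset
open AddSubgroup (IsComplement zmultiples)

theorem IsDDC.mono {G : Type*} [Sub G] {D E : Set G} (hE : IsDDC E) (hDE : D ⊆ E) : IsDDC D :=
  fun p₁ hp₁ p₂ hp₂ q₁ hq₁ q₂ hq₂ =>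
    hE p₁ (hDE hp₁) p₂ (hDE hp₂) q₁ (hDE hq₁) q₂ (hDE hq₂)

theorem IsDDC.of_image_add_left {G : Type*} [AddGroup G] {D : Set G} (v : G)
    (hD : IsDDC ((fun s => v + s) '' D)) : IsDDC D := by
  intro p₁ hp₁ p₂ hp₂ q₁ hq₁ q₂ hq₂ hsub hne
  have hsub_translate : (v + p₂) - (v + p₁) = (v + q₂) - (v + q₁) :=
    calc (v + p₂) - (v + p₁) = v + (p₂ - p₁) - v := by simp [sub_eq_add_neg, add_assoc]
      _ = v + (q₂ - q₁) - v := by rw [hsub]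
      _ = (v + q₂) - (v + q₁) := by simp [sub_eq_add_neg, add_assoc]
  have h := hD _ (Set.mem_image_of_mem _ hp₁) _ (Set.mem_image_of_mem _ hp₂)
    _ (Set.mem_image_of_mem _ hq₁) _ (Set.mem_image_of_mem _ hq₂) hsub_translate
    (fun h => hne (add_left_cancel h))
  exact ⟨add_left_cancel h.1, add_left_cancel h.2⟩

theorem exists_card_mul_le_card_mul_card_filter {α β : Type*} {s : Finset α} {t : Finset β}
    (r : α → β → Prop) [∀ a b, Decidable (r a b)] {n : ℕ} (hs : s.Nonempty)
    (hn : ∀ b ∈ t, n ≤ #{a ∈ s | r a b}) :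
    ∃ a ∈ s, #t * n ≤ #s * #{b ∈ t | r a b} := by
  obtain ⟨a, ha, hmax⟩ := s.exists_max_image (fun a => #{b ∈ t | r a b}) hs
  exact ⟨a, ha, Finset.card_mul_le_card_mul' r hn hmax⟩

section Transversal

variable {G : Type*} [AddGroup G] {H : AddSubgroup G} {A : Set G}

theorem mem_iff_mem_of_sub_mem (hA : H ≤ AddAction.stabilizer G A) {g g' : G} (h : g - g' ∈ H) :
    g ∈ A ↔ g' ∈ A := by
  simpa using AddAction.mem_stabilizer_set.1 (hA h) g'

theorem ncard_inter_le_card_filter_add_mem [DecidablePred (· ∈ A)] {W : Finset G}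
    (hW : IsComplement (H : Set G) W) (hA : H ≤ AddAction.stabilizer G A) (s : G) :
    (A ∩ W).ncard ≤ #{v ∈ W | v + s ∈ A} := by
  have hrep := AddSubgroup.isComplement_iff_existsUnique_add_neg_mem.1 hW
  simp only [← sub_eq_add_neg, SetLike.mem_coe] at hrep
  choose rep hrep_mem hrep_unique using hrep
  rw [← Set.ncard_coe_finset]
  refine Set.ncard_le_ncard_of_injOn (fun w => rep (w - s)) ?_ ?_ (Finset.finite_toSet _)
  · rintro w ⟨hwA, -⟩
    have hmem : rep (w - s) + s ∈ A := by
      refine (mem_iff_mem_of_sub_mem hA ?_).1 hwA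
      simpa [sub_eq_add_neg, add_assoc] using hrep_mem (w - s)
    simpa using hmem
  · rintro w ⟨-, hw⟩ w' ⟨-, hw'⟩ hww'
    have hsub : w - w' ∈ H := by
      have h := H.sub_mem (hrep_mem (w - s)) (hrep_mem (w' - s))
      simpa [show rep (w - s) = rep (w' - s) from Subtype.ext hww'] using h
    have hw_rep := hrep_unique w ⟨w, hw⟩ (by simp)
    have hw'_rep := hrep_unique w ⟨w', hw'⟩ hsub
    exact congrArg Subtype.val (hw_rep.trans hw'_rep.symm)

end Transversal

theorem isComplement_zmultiples_Ico {G : Type*} [AddCommGroup G] [LinearOrder G]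
    [IsOrderedAddMonoid G] [Archimedean G] {p : G} (hp : 0 < p) (a : G) :
    IsComplement (zmultiples p : Set G) (Set.Ico a (a + p)) := by
  rw [AddSubgroup.isComplement_iff_existsUnique_neg_add_mem]
  intro g
  obtain ⟨m, hm, hm_unique⟩ := existsUnique_sub_zsmul_mem_Ico hp g a
  refine ⟨⟨m • p, m, rfl⟩, by simpa [neg_add_eq_sub] using hm, ?_⟩
  rintro ⟨_, k, rfl⟩ hk
  rw [← hm_unique k (by simpa [neg_add_eq_sub] using hk)]

theorem isComplement_prod {G G' : Type*} [AddGroup G] [AddGroup G'] {S T : Set G} {S' T' : Set G'}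
    (h : IsComplement S T) (h' : IsComplement S' T') :
    IsComplement (S ×ˢ S') (T ×ˢ T') := by
  rw [AddSubgroup.isComplement_iff_existsUnique_neg_add_mem] at h h' ⊢
  rintro ⟨g, g'⟩
  obtain ⟨s, hs, hs_unique⟩ := h g
  obtain ⟨s', hs', hs'_unique⟩ := h' g'
  refine ⟨⟨(s, s'), s.2, s'.2⟩, ⟨hs, hs'⟩, ?_⟩
  rintro ⟨⟨t, t'⟩, ht, ht'⟩ ⟨hgt, hgt'⟩
  have hts : t = s := congrArg Subtype.val (hs_unique ⟨t, ht⟩ hgt)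
  have hts' : t' = s' := congrArg Subtype.val (hs'_unique ⟨t', ht'⟩ hgt')
  exact Subtype.ext (Prod.ext hts hts')

theorem isComplement_zmultiples_prod_Ico {p q : ℤ} (hp : 0 < p) (hq : 0 < q) :
    IsComplement ((zmultiples p).prod (zmultiples q) : Set (ℤ × ℤ))
      (Finset.Ico 0 p ×ˢ Finset.Ico 0 q : Finset (ℤ × ℤ)) := by
  simpa [AddSubgroup.coe_prod] using
    isComplement_prod (isComplement_zmultiples_Ico hp 0) (isComplement_zmultiples_Ico hq 0)

theorem zmultiples_prod_le_stabilizer {G G' : Type*} [AddCommGroup G] [AddCommGroup G']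
    {A : Set (G × G')} {a : G} {b : G'}
    (hA : ∀ v : G × G', (v ∈ A ↔ (v.1 + a, v.2) ∈ A) ∧ (v ∈ A ↔ (v.1, v.2 + b) ∈ A)) :
    (zmultiples a).prod (zmultiples b) ≤ AddAction.stabilizer (G × G') A := by
  have ha : (a, 0) ∈ AddAction.stabilizer (G × G') A :=
    AddAction.mem_stabilizer_set.2 fun v => by
      simpa [Prod.add_def, add_comm a] using (hA v).1.symm
  have hb : (0, b) ∈ AddAction.stabilizer (G × G') A :=
    AddAction.mem_stabilizer_set.2 fun v => by
      simpa [Prod.add_def, add_comm b] using (hA v).2.symm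
  rw [AddSubgroup.prod_le_iff, AddMonoidHom.map_zmultiples, AddMonoidHom.map_zmultiples]
  exact ⟨AddSubgroup.zmultiples_le_of_mem ha, AddSubgroup.zmultiples_le_of_mem hb⟩

theorem stmt_18_general {G : Type*} [AddGroup G] {H : AddSubgroup G} {A : Set G} {W : Finset G}
    (hW : IsComplement (H : Set G) W) (hA : H ≤ AddAction.stabilizer G A)
    (S : Finset G) (hDDC : ∀ v ∈ W, IsDDC (A ∩ ((fun s => v + s) '' (S : Set G)))) :
    ∃ D ⊆ S, IsDDC (D : Set G) ∧ ⌈((A ∩ W).ncard : ℚ) / #W * #S⌉ ≤ (#D : ℤ) := by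
  classical
  have hW_ne : W.Nonempty := Finset.coe_nonempty.1 hW.nonempty_right
  obtain ⟨v, hv, hcard⟩ := exists_card_mul_le_card_mul_card_filter (fun v s => v + s ∈ A) hW_ne
    (fun s (_ : s ∈ S) => ncard_inter_le_card_filter_add_mem hW hA s)
  refine ⟨{s ∈ S | v + s ∈ A}, Finset.filter_subset _ _, ?_, ?_⟩
  · refine .of_image_add_left v ((hDDC v hv).mono ?_)
    rintro _ ⟨s, hs, rfl⟩
    obtain ⟨hsS, hsA⟩ := Finset.mem_filter.1 hs
    exact ⟨hsA, s, hsS, rfl⟩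
  · rw [Int.ceil_le, div_mul_eq_mul_div, div_le_iff₀ (by exact_mod_cast hW_ne.card_pos),
      mul_comm, mul_comm (Int.cast _)]
    exact_mod_cast hcard

/-- If `A` is a doubly periodic array of period `(η,κ)` with `d` dots per `κ × η` window,
such that the dots of `A` in every translate of the shape `S` form a distinct difference
configuration, then `S` contains a distinct difference configuration with at least
`⌈(d/(ηκ))·|S|⌉` dots. -/
theorem stmt_18 (S : Finset (ℤ × ℤ)) (hS : S.Nonempty) (η κ : ℕ) (hη : 0 < η) (hκ : 0 < κ)
    (A : Set (ℤ × ℤ))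
    (hper : ∀ v : ℤ × ℤ, (v ∈ A ↔ (v.1 + (η : ℤ), v.2) ∈ A) ∧
      (v ∈ A ↔ (v.1, v.2 + (κ : ℤ)) ∈ A))
    (d : ℕ) (hd : d = (A ∩ Set.Ico (0 : ℤ) (η : ℤ) ×ˢ Set.Ico (0 : ℤ) (κ : ℤ)).ncard)
    (hDDC : ∀ v : ℤ × ℤ, IsDDC (A ∩ ((fun s => v + s) '' (S : Set (ℤ × ℤ))))) :
    ∃ D : Finset (ℤ × ℤ), (D : Set (ℤ × ℤ)) ⊆ (S : Set (ℤ × ℤ)) ∧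
      IsDDC (D : Set (ℤ × ℤ)) ∧
      ⌈(d : ℚ) / ((η : ℚ) * (κ : ℚ)) * (S.card : ℚ)⌉ ≤ (D.card : ℤ) := by
  simpa [hd] using stmt_18_general
    (isComplement_zmultiples_prod_Ico (Int.natCast_pos.2 hη) (Int.natCast_pos.2 hκ))
    (zmultiples_prod_le_stabilizer hper) S fun v _ => hDDC v
end
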